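/- Let q be a prime and let M2, N2 be integers coprime to q. Then ∑ e((M2·v3·v34* + N2·v14)/q) = −(q−1)·S(M2, N2; q), where the sum runs over all triples (v3, v4, v14) with v3 ∈ ℤ/qℤ, v4 ∈ (ℤ/qℤ)ˣ, v14 ∈ (ℤ/qℤ)ˣ such that v34 := v3·v14 − v4² ≠ 0 in ℤ/qℤ, and v34* denotes the multiplicative inverse of v34 modulo q. -/

import Mathlib

lemma aux_units {q : ℕ} [Fact q.Prime] (f : ZMod q → ℂ) :
    ∑ t : ZMod q, (if t ≠ 0 then f t else 0) = ∑ u : (ZMod q)ˣ, f (u : ZMod q) := by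
  rw [← Finset.sum_filter]
  symm
  refine Finset.sum_bij (fun u _ => (u : ZMod q)) ?_ ?_ ?_ ?_
  · intro u _; simp
  · intro u _ v _ h; exact Units.ext h
  · intro t ht
    exact ⟨Units.mk0 t (by simpa using ht), Finset.mem_univ _, rfl⟩
  · intro u _; rfl

lemma aux_char {q : ℕ} [Fact q.Prime] (x : ZMod q) :
    Complex.exp (2 * Real.pi * Complex.I * ((x.val : ℂ) / (q : ℂ))) = ZMod.stdAddChar x := by
  rw [ZMod.stdAddChar_apply, ZMod.toCircle_apply]
  congr 1
  ring

lemma aux_sum {q : ℕ} [Fact q.Prime] (c : ZMod q) (hc : c ≠ 0) :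
    ∑ w : (ZMod q)ˣ, (ZMod.stdAddChar (c * (w : ZMod q)) : ℂ) = -1 := by
  rw [← aux_units (fun t => (ZMod.stdAddChar (c * t) : ℂ))]
  have h := AddChar.sum_mulShift (R := ZMod q) (R' := ℂ) c (ZMod.isPrimitive_stdAddChar q)
  rw [if_neg hc] at h
  have h2 : ∀ t : ZMod q, (if t ≠ 0 then (ZMod.stdAddChar (c * t) : ℂ) else 0)
      = ZMod.stdAddChar (t * c) - (if t = 0 then 1 else 0) := by
    intro t
    by_cases ht : t = 0
    · simp [ht]
    · simp [ht, mul_comm]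
  rw [Finset.sum_congr rfl (fun t _ => h2 t), Finset.sum_sub_distrib, h]
  simp

lemma aux_inner {q : ℕ} [Fact q.Prime] (M N : ZMod q) (hM : M ≠ 0) (b a : (ZMod q)ˣ) :
    ∑ v : ZMod q, (if v * (a : ZMod q) - (b : ZMod q) ^ 2 ≠ 0 then
      (ZMod.stdAddChar (M * v * (v * (a : ZMod q) - (b : ZMod q) ^ 2)⁻¹ + N * (a : ZMod q)) : ℂ)
      else 0) = - ZMod.stdAddChar (M * ((a⁻¹ : (ZMod q)ˣ) : ZMod q) + N * (a : ZMod q)) := by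
  have ha : (a : ZMod q) ≠ 0 := a.ne_zero
  have hb : (b : ZMod q) ≠ 0 := b.ne_zero
  let e : ZMod q ≃ ZMod q :=
    { toFun := fun t => (t + (b : ZMod q) ^ 2) * (a : ZMod q)⁻¹
      invFun := fun v => v * (a : ZMod q) - (b : ZMod q) ^ 2
      left_inv := fun t => by field_simp; try ring
      right_inv := fun t => by field_simp; try ring }
  rw [← Equiv.sum_comp e]
  have h1 : ∀ t : ZMod q, e t * (a : ZMod q) - (b : ZMod q) ^ 2 = t := fun t => e.left_inv t
  simp only [h1]
  rw [aux_units (fun t => (ZMod.stdAddChar (M * e t * t⁻¹ + N * (a : ZMod q)) : ℂ))]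
  rw [← Equiv.sum_comp ((Equiv.inv (ZMod q)ˣ).trans (Equiv.mulLeft (b ^ 2)))]
  have h2 : ∀ w : (ZMod q)ˣ, (ZMod.stdAddChar (M * e
      ((((Equiv.inv (ZMod q)ˣ).trans (Equiv.mulLeft (b ^ 2))) w : (ZMod q)ˣ) : ZMod q) *
      ((((Equiv.inv (ZMod q)ˣ).trans (Equiv.mulLeft (b ^ 2))) w : (ZMod q)ˣ) : ZMod q)⁻¹
      + N * (a : ZMod q)) : ℂ) =
      ZMod.stdAddChar (M * ((a⁻¹ : (ZMod q)ˣ) : ZMod q) + N * (a : ZMod q)) *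
      ZMod.stdAddChar (M * (a : ZMod q)⁻¹ * (w : ZMod q)) := by
    intro w
    have hw : (w : ZMod q) ≠ 0 := w.ne_zero
    rw [← AddChar.map_add_eq_mul]
    congr 1
    simp [e, -ZMod.inv_coe_unit]
    field_simp
    ring
  rw [Finset.sum_congr rfl (fun w _ => h2 w), ← Finset.mul_sum,
    aux_sum _ (mul_ne_zero hM (inv_ne_zero ha))]
  ring


/-- The classical Kloosterman sum `S(a,b;c) = ∑_{x mod c, (x,c)=1} e((a·x + b·x*)/c)`. -/
noncomputable def kloostermanSum (a b : ℤ) (c : ℕ) [NeZero c] : ℂ :=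
  ∑ x : (ZMod c)ˣ,
    Complex.exp (2 * Real.pi * Complex.I *
      ((((a : ZMod c) * (x : ZMod c) + (b : ZMod c) * ((x⁻¹ : (ZMod c)ˣ) : ZMod c)).val : ℂ)
        / (c : ℂ)))

/-- For a prime `q` and integers `M2, N2` coprime to `q`, the exponential sum over triples
`(v3, v4, v14)` with `v3 ∈ ℤ/qℤ`, `v4, v14 ∈ (ℤ/qℤ)ˣ` and `v34 := v3·v14 - v4² ≠ 0`
of `e((M2·v3·v34⁻¹ + N2·v14)/q)` equals `-(q-1)·S(M2, N2; q)`. -/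
theorem sp4_kloosterman_w0_partial_sum_eval
    (q : ℕ) [Fact q.Prime] (M2 N2 : ℤ)
    (hM2 : IsCoprime M2 (q : ℤ)) (hN2 : IsCoprime N2 (q : ℤ)) :
    ∑ v3 : ZMod q, ∑ v4 : (ZMod q)ˣ, ∑ v14 : (ZMod q)ˣ,
      (if v3 * (v14 : ZMod q) - (v4 : ZMod q) ^ 2 ≠ 0 then
        Complex.exp (2 * Real.pi * Complex.I *
          ((((M2 : ZMod q) * v3 * (v3 * (v14 : ZMod q) - (v4 : ZMod q) ^ 2)⁻¹
              + (N2 : ZMod q) * (v14 : ZMod q)).val : ℂ) / (q : ℂ)))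
      else 0)
      = -((q : ℂ) - 1) * kloostermanSum M2 N2 q := by
  have hM : (M2 : ZMod q) ≠ 0 := by
    intro h
    rw [ZMod.intCast_zmod_eq_zero_iff_dvd] at h
    have hu := hM2.symm.isUnit_of_dvd' dvd_rfl h
    exact (Nat.prime_iff_prime_int.mp (Fact.out : q.Prime)).not_isUnit hu
  simp only [kloostermanSum, aux_char]
  rw [Finset.sum_comm]
  have h1 : ∀ b : (ZMod q)ˣ, ∑ v : ZMod q, ∑ a : (ZMod q)ˣ,
      (if v * (a : ZMod q) - (b : ZMod q) ^ 2 ≠ 0 then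
      (ZMod.stdAddChar ((M2 : ZMod q) * v * (v * (a : ZMod q) - (b : ZMod q) ^ 2)⁻¹
        + (N2 : ZMod q) * (a : ZMod q)) : ℂ) else 0) =
      - ∑ x : (ZMod q)ˣ, (ZMod.stdAddChar ((M2 : ZMod q) * (x : ZMod q)
        + (N2 : ZMod q) * ((x⁻¹ : (ZMod q)ˣ) : ZMod q)) : ℂ) := by
    intro b
    rw [Finset.sum_comm, Finset.sum_congr rfl (fun a _ => aux_inner _ _ hM b a),
      Finset.sum_neg_distrib, ← Equiv.sum_comp (Equiv.inv (ZMod q)ˣ)]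
    simp [-ZMod.inv_coe_unit]
  rw [Finset.sum_congr rfl (fun b _ => h1 b), Finset.sum_const, Finset.card_univ,
    ZMod.card_units, nsmul_eq_mul, Nat.cast_sub (Fact.out : q.Prime).one_le]
  push_cast
  ring
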